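/- The series γ₂ := ∑_{k=1}^∞ c(k)/k² converges and equals ζ(2) − (1/2)(log 4)², i.e. π²/6 − 2 (log 2)². -/

import Mathlib

/-!
Write `L(u) = ∑ u^(k+1)/(k+1)²` for the dilogarithm and `G(x) = ∑ c(k+1) x^(k+1)/(k+1)²`, so that
the sum sought is `G(1)`. The substitution `x = 4u(1-u)`, `0 ≤ u ≤ 1/2`, makes the square root in
the binomial series `∑ c(k) x^k = (1-x)^(-1/2)` rational: `√(1-x) = 1 - 2u`. Integrating that series
termwise gives `∑ c(k+1) x^(k+1)/(k+1) = -2 log(1-u)` (`tsum_c_div`), which is `x G'(x)`. It follows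
that
`T(u) = G(4u(1-u)) - L(u) + L(1-u) + log u log(1-u) + log²(1-u)`
has derivative zero on `(0, 1/2)`. Since `T` is continuous on `[0, 1/2]`, the values
`T(0) = L(1) = ζ(2)` and `T(1/2) = G(1) + 2 log² 2` agree. The constant combines the reflection
formula of the dilogarithm with the closed form of `G`, so the value `L(1/2)` is never needed.
-/

/-- `c k = |binom(-1/2, k)| = binom(2k, k) / 4^k`. -/
noncomputable def c (k : ℕ) : ℝ := (Nat.choose (2 * k) k : ℝ) / 4 ^ k

/-- `ζ(n) = ∑_{m=1}^∞ m^{-n}`. -/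
noncomputable def zetaVal (n : ℕ) : ℝ := ∑' m : ℕ, 1 / (m + 1 : ℝ) ^ n

/-- The termwise primitive `∑ a(k) x^(k+1)/(k+1)` of the power series `∑ a(k) x^k`. -/
noncomputable def primSeries (a : ℕ → ℝ) (x : ℝ) : ℝ := ∑' k : ℕ, a k * (x ^ (k + 1) / (k + 1 : ℝ))

lemma hasDerivAt_primSeries {a : ℕ → ℝ} (ha : ∀ k, |a k| ≤ 1) {x : ℝ} (hx : |x| < 1) :
    HasDerivAt (primSeries a) (∑' k : ℕ, a k * x ^ k) x := by
  obtain ⟨r, hr, hr1⟩ := exists_between hx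
  have hr0 : 0 ≤ r := (abs_nonneg x).trans hr.le
  refine hasDerivAt_tsum_of_isPreconnected (u := fun k : ℕ => r ^ k) (t := Set.Ioo (-r) r)
    (y₀ := 0) (g' := fun k y => a k * y ^ k) (summable_geometric_of_lt_one hr0 hr1) isOpen_Ioo
    isPreconnected_Ioo ?_ ?_ ?_ ?_ ?_
  · intro k y _
    have h := ((hasDerivAt_pow (k + 1) y).div_const (k + 1 : ℝ)).const_mul (a k)
    convert! h using 1
    have : (k + 1 : ℝ) ≠ 0 := by positivity
    push_cast
    field_simp
  · intro k y hy
    have hy' : |y| ≤ r := (abs_lt.2 hy).le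
    rw [norm_mul, norm_pow, Real.norm_eq_abs, Real.norm_eq_abs]
    calc |a k| * |y| ^ k ≤ 1 * r ^ k := by gcongr; exact ha k
      _ = r ^ k := one_mul _
  · have := (abs_nonneg x).trans_lt hr
    constructor <;> linarith
  · simp [summable_zero]
  · exact abs_lt.1 hr

lemma primSeries_zero (a : ℕ → ℝ) : primSeries a 0 = 0 := by simp [primSeries]

lemma summable_inv_succ_sq : Summable (fun k : ℕ => 1 / (k + 1 : ℝ) ^ 2) := by
  have := (summable_nat_add_iff (f := fun k : ℕ => 1 / (k : ℝ) ^ 2) 1).2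
    (Real.summable_one_div_nat_pow.2 one_lt_two)
  simpa using this

/-- Coefficients of size `O(1/k)` make the primitive continuous up to the endpoint `1`. -/
lemma continuousOn_primSeries {b : ℕ → ℝ} (hb : ∀ k, |b k| ≤ 1) :
    ContinuousOn (primSeries fun k => b k / (k + 1)) (Set.Icc 0 1) := by
  refine continuousOn_tsum (fun k => by fun_prop) summable_inv_succ_sq ?_
  intro k x hx
  have h1 : |x ^ (k + 1)| ≤ 1 := by
    rw [abs_pow, abs_of_nonneg hx.1]; exact pow_le_one₀ hx.1 hx.2
  have h2 : |(k + 1 : ℝ)| = k + 1 := abs_of_pos (by positivity)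
  rw [Real.norm_eq_abs, abs_mul, abs_div, abs_div, h2, div_mul_div_comm, ← pow_two]
  gcongr
  exact mul_le_one₀ (hb k) (abs_nonneg _) h1

lemma abs_div_succ_le {b : ℕ → ℝ} (hb : ∀ k, |b k| ≤ 1) (k : ℕ) : |b k / (k + 1)| ≤ 1 := by
  have h2 : |(k + 1 : ℝ)| = k + 1 := abs_of_pos (by positivity)
  rw [abs_div, h2, div_le_one (by positivity)]
  have : (0 : ℝ) ≤ k := by positivity
  linarith [hb k]

lemma c_zero : c 0 = 1 := by simp [c]

lemma c_nonneg (k : ℕ) : 0 ≤ c k := by unfold c; positivity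

lemma c_le_one (k : ℕ) : c k ≤ 1 := by
  unfold c
  rw [div_le_one (by positivity)]
  exact_mod_cast Nat.centralBinom_le_four_pow k

lemma abs_c_le_one (k : ℕ) : |c k| ≤ 1 := by
  rw [abs_of_nonneg (c_nonneg k)]; exact c_le_one k

lemma c_succ (k : ℕ) : (k + 1 : ℝ) * c (k + 1) = (1 / 2 + k) * c k := by
  have h : ((k + 1 : ℕ) : ℝ) * ((2 * (k + 1)).choose (k + 1) : ℕ)
      = 2 * (2 * k + 1) * ((2 * k).choose k : ℕ) := by
    exact_mod_cast Nat.succ_mul_centralBinom_succ k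
  unfold c
  push_cast at h
  rw [← mul_div_assoc, h, pow_succ]
  field_simp
  ring

/-- `c k` is the rising factorial `(1/2)(3/2)⋯(k - 1/2)` divided by `k!`. -/
lemma choose_eq_c (k : ℕ) : Ring.choose ((1 / 2 : ℝ) + k - 1) k = c k := by
  rw [← Ring.multichoose_eq]
  have key : ∀ n : ℕ, (ascPochhammer ℝ n).eval (1 / 2 : ℝ) = n.factorial * c n := by
    intro n
    induction n with
    | zero => simp [c_zero]
    | succ n ih =>
      rw [ascPochhammer_succ_eval, ih, Nat.factorial_succ]
      push_cast
      linear_combination (-(n.factorial : ℝ)) * c_succ n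
  have h := Ring.factorial_nsmul_multichoose_eq_ascPochhammer (1 / 2 : ℝ) k
  rw [Polynomial.ascPochhammer_smeval_eq_eval, key, nsmul_eq_mul] at h
  exact mul_left_cancel₀ (by positivity) h

lemma abs_x_lt {u : ℝ} (h0 : 0 ≤ u) (h1 : u < 1 / 2) : |4 * u * (1 - u)| < 1 := by
  rw [abs_of_nonneg (by nlinarith)]; nlinarith

/-- The binomial series `∑ c(k) x^k = (1-x)^(-1/2)` at `x = 4u(1-u)`. -/
lemma hasSum_c {u : ℝ} (h0 : 0 ≤ u) (h1 : u < 1 / 2) :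
    HasSum (fun k : ℕ => c k * (4 * u * (1 - u)) ^ k) (1 / (1 - 2 * u)) := by
  have h := (Real.one_div_one_sub_rpow_hasFPowerSeriesOnBall_zero (1 / 2)).hasSum
    (y := 4 * u * (1 - u)) (by
      rw [← ENNReal.ofReal_one, Metric.eball_ofReal, mem_ball_zero_iff]; exact abs_x_lt h0 h1)
  have hs : (1 - 4 * u * (1 - u)) ^ (1 / 2 : ℝ) = 1 - 2 * u := by
    rw [← Real.sqrt_eq_rpow, show 1 - 4 * u * (1 - u) = (1 - 2 * u) ^ 2 by ring,
      Real.sqrt_sq (by linarith)]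
  rw [zero_add, hs] at h
  convert! h using 2 with k
  rw [FormalMultilinearSeries.ofScalars_apply_eq, choose_eq_c, smul_eq_mul]

lemma hasDerivAt_x (u : ℝ) : HasDerivAt (fun u : ℝ => 4 * u * (1 - u)) (4 * (1 - 2 * u)) u := by
  have h := ((hasDerivAt_id u).const_mul 4).mul ((hasDerivAt_id u).const_sub 1)
  convert! h using 1
  simp; ring

lemma hasDerivAt_log_one_sub {u : ℝ} (h : u < 1) :
    HasDerivAt (fun u : ℝ => Real.log (1 - u)) (-1 / (1 - u)) u :=
  ((hasDerivAt_id u).const_sub 1).log (by simp; linarith)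

/-- A continuous function on `[0, b]` with zero derivative inside has equal end values. -/
lemma eq_of_deriv_zero {f : ℝ → ℝ} {b : ℝ} (hb : 0 < b) (hc : ContinuousOn f (Set.Icc 0 b))
    (hd : ∀ x ∈ Set.Ioo 0 b, HasDerivAt f 0 x) : f b = f 0 := by
  obtain ⟨_, _, h⟩ := exists_hasDerivAt_eq_slope f (fun _ => 0) hb hc hd
  rw [eq_comm, div_eq_zero_iff] at h
  rcases h with h | h <;> linarith

/-- The first integration: `∑ c(k+1) x^(k+1)/(k+1) = -2 log(1-u)` for `x = 4u(1-u)`. -/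
lemma tsum_c_div {u : ℝ} (h0 : 0 < u) (h1 : u < 1 / 2) :
    primSeries (fun k => c (k + 1)) (4 * u * (1 - u)) = -2 * Real.log (1 - u) := by
  have hd : ∀ v : ℝ, 0 ≤ v → v < 1 / 2 → HasDerivAt
      (fun v : ℝ => primSeries (fun k => c (k + 1)) (4 * v * (1 - v)) + 2 * Real.log (1 - v))
      ((∑' k : ℕ, c (k + 1) * (4 * v * (1 - v)) ^ k) * (4 * (1 - 2 * v)) + 2 * (-1 / (1 - v)))
      v := by
    intro v hv hv'
    exact ((hasDerivAt_primSeries (fun k => abs_c_le_one (k + 1))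
      (abs_x_lt hv hv')).comp v
      (hasDerivAt_x v)).add ((hasDerivAt_log_one_sub (by linarith)).const_mul 2)
  have h := eq_of_deriv_zero h0
    (fun v hv => (hd v hv.1 (hv.2.trans_lt h1)).continuousAt.continuousWithinAt) ?_
  · simp [primSeries_zero] at h
    linarith
  · intro v hv
    have hv1 : v < 1 / 2 := hv.2.trans h1
    convert! hd v hv.1.le hv1 using 1
    -- Removing the constant term of the binomial series leaves `x` times the series of the
    -- derivative.
    have hs := (hasSum_nat_add_iff' 1).2 (hasSum_c hv.1.le hv1)
    have e : (∑' k : ℕ, c (k + 1) * (4 * v * (1 - v)) ^ k) * (4 * v * (1 - v))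
        = 1 / (1 - 2 * v) - 1 := by
      rw [← tsum_mul_right]
      have := hs.tsum_eq
      simp only [Finset.sum_range_one, pow_zero, c_zero, mul_one] at this
      rw [← this]
      exact tsum_congr fun k => by ring
    have p0 : v ≠ 0 := hv.1.ne'
    have p1 : 1 - v ≠ 0 := by linarith
    have p2 : 1 - 2 * v ≠ 0 := by linarith
    have e' : (∑' k : ℕ, c (k + 1) * (4 * v * (1 - v)) ^ k)
        = (1 / (1 - 2 * v) - 1) / (4 * v * (1 - v)) := by
      rw [← e]; field_simp
    rw [e']
    field_simp
    ring

/-- Since `log(1-u)` vanishes to first order at `0`, the product extends continuously by its junk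
value `log 0 * log 1 = 0`. -/
lemma continuousOn_log_mul_log :
    ContinuousOn (fun u : ℝ => Real.log u * Real.log (1 - u)) (Set.Icc 0 (1 / 2)) := by
  have h : (fun u : ℝ => Real.log u * Real.log (1 - u))
      = fun u => (u * Real.log u) * dslope (fun u : ℝ => Real.log (1 - u)) 0 u := by
    ext u
    have := sub_smul_dslope (fun u : ℝ => Real.log (1 - u)) 0 u
    simp only [sub_zero, smul_eq_mul, Real.log_one] at this
    rw [← this]; ring
  intro u hu
  apply ContinuousAt.continuousWithinAt
  have hu1 : u < 1 := by linarith [hu.2]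
  rw [h]
  refine Real.continuous_mul_log.continuousAt.mul ?_
  rcases eq_or_ne u 0 with rfl | h0
  · exact continuousAt_dslope_same.2 (hasDerivAt_log_one_sub hu1).differentiableAt
  · exact (continuousAt_dslope_of_ne h0).2 (hasDerivAt_log_one_sub hu1).continuousAt

/-- `u L'(u) = -log(1-u)` for the dilogarithm `L`. -/
lemma hasDerivAt_dilog {u : ℝ} (h0 : 0 < u) (h1 : u < 1) :
    HasDerivAt (primSeries fun k => 1 / (k + 1)) (-Real.log (1 - u) / u) u := by
  have hu : |u| < 1 := by rwa [abs_of_pos h0]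
  convert! hasDerivAt_primSeries (abs_div_succ_le (b := fun _ => 1) (by simp)) hu using 1
  rw [← (Real.hasSum_pow_div_log_of_abs_lt_one hu).tsum_eq, ← tsum_div_const]
  refine tsum_congr fun k => ?_
  have : (k + 1 : ℝ) ≠ 0 := by positivity
  field_simp
  ring

/-- `x G'(x) = -2 log(1-u)` at `x = 4u(1-u)`. -/
lemma hasDerivAt_G {u : ℝ} (h0 : 0 < u) (h1 : u < 1 / 2) :
    HasDerivAt (primSeries fun k => c (k + 1) / (k + 1))
      (-2 * Real.log (1 - u) / (4 * u * (1 - u))) (4 * u * (1 - u)) := by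
  convert! hasDerivAt_primSeries (abs_div_succ_le fun k => abs_c_le_one (k + 1))
    (abs_x_lt h0.le h1) using 1
  rw [← tsum_c_div h0 h1, primSeries, ← tsum_div_const]
  refine tsum_congr fun k => ?_
  have : (k + 1 : ℝ) ≠ 0 := by positivity
  have p1 : 1 - u ≠ 0 := by linarith
  field_simp
  ring

/-- Comparison of the end values of the function `T` of constant value `ζ(2)`. -/
lemma primSeries_c_one :
    primSeries (fun k => c (k + 1) / (k + 1)) 1
      = primSeries (fun k => 1 / (k + 1)) 1 - 2 * Real.log 2 ^ 2 := by
  have h := eq_of_deriv_zero (b := 1 / 2) (by norm_num)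
    (f := fun u : ℝ => primSeries (fun k => c (k + 1) / (k + 1)) (4 * u * (1 - u))
      - primSeries (fun k => 1 / (k + 1)) u + primSeries (fun k => 1 / (k + 1)) (1 - u)
      + Real.log u * Real.log (1 - u) + Real.log (1 - u) ^ 2) ?_ ?_
  · have hl : Real.log (1 / 2) = -Real.log 2 := by rw [one_div, Real.log_inv]
    simp only [show (1 : ℝ) - 1 / 2 = 1 / 2 by norm_num,
      show (4 : ℝ) * (1 / 2) * (1 / 2) = 1 by norm_num, hl, mul_zero, zero_mul, sub_zero, primSeries_zero,
      Real.log_one, Real.log_zero] at h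
    linarith
  · have hL := continuousOn_primSeries (b := fun _ => 1) (by simp)
    have hG := continuousOn_primSeries (fun k => abs_c_le_one (k + 1))
    refine ((((hG.comp (by fun_prop) ?_).sub (hL.mono ?_)).add (hL.comp (by fun_prop) ?_)).add
      continuousOn_log_mul_log).add ?_
    · intro u hu
      constructor <;> nlinarith [hu.1, hu.2, sq_nonneg (1 - 2 * u)]
    · exact Set.Icc_subset_Icc_right (by norm_num)
    · intro u hu
      constructor <;> linarith [hu.1, hu.2]
    · intro u hu
      exact ((hasDerivAt_log_one_sub (by linarith [hu.2])).continuousAt.pow 2).continuousWithinAt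
  · intro u hu
    have h0 : 0 < u := hu.1
    have h1 : u < 1 / 2 := hu.2
    have hlog := hasDerivAt_log_one_sub (u := u) (by linarith)
    have hL1 := (hasDerivAt_dilog (u := 1 - u) (by linarith) (by linarith)).comp u
      ((hasDerivAt_id u).const_sub 1)
    have H := (((((hasDerivAt_G h0 h1).comp u (hasDerivAt_x u)).sub
      (hasDerivAt_dilog h0 (by linarith))).add hL1).add
      ((Real.hasDerivAt_log h0.ne').mul hlog)).add (hlog.pow 2)
    convert! H using 1
    have p0 : u ≠ 0 := h0.ne'
    have p1 : 1 - u ≠ 0 := by linarith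
    rw [sub_sub_cancel]
    push_cast
    field_simp
    ring

lemma zetaVal_two : zetaVal 2 = Real.pi ^ 2 / 6 := by
  have h := (hasSum_nat_add_iff' 1).2 hasSum_zeta_two
  simp only [Finset.sum_range_one, Nat.cast_zero, Nat.cast_add, Nat.cast_one] at h
  rw [zetaVal, h.tsum_eq]
  norm_num

/-- The series `γ₂ = ∑_{k=1}^∞ c(k)/k²` converges and equals
`ζ(2) - (1/2)(log 4)²`, i.e. `π²/6 - 2 (log 2)²`. -/
theorem gamma_two :
    HasSum (fun k : ℕ => c (k + 1) / (k + 1 : ℝ) ^ 2)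
      (zetaVal 2 - (1 / 2) * (Real.log 4) ^ 2) ∧
    zetaVal 2 - (1 / 2) * (Real.log 4) ^ 2
      = Real.pi ^ 2 / 6 - 2 * (Real.log 2) ^ 2 := by
  have hlog : Real.log 4 = 2 * Real.log 2 := by
    rw [show (4 : ℝ) = 2 ^ 2 by norm_num, Real.log_pow]; norm_num
  have hS : Summable (fun k : ℕ => c (k + 1) / (k + 1 : ℝ) ^ 2) :=
    Summable.of_nonneg_of_le (fun k => div_nonneg (c_nonneg _) (by positivity))
      (fun k => by gcongr; exact c_le_one _) summable_inv_succ_sq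
  refine ⟨?_, by rw [zetaVal_two, hlog]; ring⟩
  convert! hS.hasSum using 1
  have hG : primSeries (fun k => c (k + 1) / (k + 1)) 1
      = ∑' k : ℕ, c (k + 1) / (k + 1 : ℝ) ^ 2 :=
    tsum_congr fun k => by rw [one_pow, div_mul_div_comm, mul_one, pow_two]
  have hL : primSeries (fun k => 1 / (k + 1)) 1 = zetaVal 2 :=
    tsum_congr fun k => by rw [one_pow, div_mul_div_comm, mul_one, pow_two]
  rw [← hG, primSeries_c_one, hL, hlog]
  ring
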